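/- arXiv:2406.07821 — 3 statements merged into one kernel-verified Lean document; each statement's English description precedes it below -/
import Mathlib

section
/- Let $G$ be a connected graph on $n$ vertices, let $S \subseteq V(G)$ with $1 \le |S| < n$, and let $T$ be a set of isolated vertices of $G - S$ such that every vertex of $T$ is adjacent in $G$ to every vertex of $S$. Let $H_1$ and $H_2$ be two graphs with vertex set $T$, and for $i = 1, 2$ let $G_i$ be the graph obtained from $G$ by adding the edges of $H_i$ inside $T$. Then there exists a constant $R$ depending only on $|T|$ such that: if $\rho(G) > R$ and $H_1$ is strictly walk-preferable to $H_2$, then $\rho(G_1) > \rho(G_2)$. -/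
open Finset Matrix SimpleGraph
open scoped Classical

/-- `walkCount G ℓ u` is the number of walks of length `ℓ` in `G` starting at `u`
(the quantity `w^ℓ_G(u)` of the paper, with `walkCount G 0 u = 1`). -/
noncomputable def walkCount {V : Type*} [Fintype V] (G : SimpleGraph V) : ℕ → V → ℕ
  | 0, _ => 1
  | ℓ + 1, u => ∑ v ∈ Finset.univ.filter (fun v => G.Adj u v), walkCount G ℓ v

/-- `totalWalks G ℓ = W^ℓ(G) = ∑_u w^ℓ_G(u)`, the number of walks of length `ℓ` in `G`. -/
noncomputable def totalWalks {V : Type*} [Fintype V] (G : SimpleGraph V) (ℓ : ℕ) : ℕ :=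
  ∑ u, walkCount G ℓ u

/-- The spectral radius `ρ(G)` of a graph `G`: the largest eigenvalue of its
adjacency matrix. -/
noncomputable def spectralRad {V : Type*} [Fintype V] (G : SimpleGraph V) : ℝ :=
  sSup {μ : ℝ | ∃ x : V → ℝ, x ≠ 0 ∧ (G.adjMatrix ℝ) *ᵥ x = μ • x}

/-! The Perron vectors `x₁`, `x₂` of `G ⊔ H₁`, `G ⊔ H₂` satisfy the same equations outside `T`, so
pairing them through the adjacency matrix of `G` leaves
`(ρ₁ - ρ₂) * ∑_{v ∉ T} x₁ v * x₂ v = (∑_T x₁) * (∑_S x₂) - (∑_S x₁) * (∑_T x₂)`.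
On `T` the vector `xᵢ` solves `(ρᵢ - A(Hᵢ)) z = ∑_S xᵢ`, and expanding the resolvent gives
`∑_T xᵢ = (∑_S xᵢ) * ∑ₖ Wᵏ(Hᵢ) / ρᵢ ^ (k + 1)`. For large `ρᵢ` this series is governed by the first
walk count in which `H₁` and `H₂` differ, so `ρ₁ ≤ ρ₂` would make the two sides of the identity
differ in sign. The bound on `ρ(G)` depends on `|T|` alone because, by Cayley–Hamilton, the first
differing walk count has length less than `2|T|`. -/

section NonnegativeSymmetricMatrices

variable {n : Type*} [Fintype n]

open scoped MatrixOrder in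
lemma posSemidef_smul_one_sub_of_spectrum_le {A : Matrix n n ℝ} (hA : A.IsHermitian) {r : ℝ}
    (hr : ∀ μ ∈ spectrum ℝ A, μ ≤ r) : (r • (1 : Matrix n n ℝ) - A).PosSemidef := by
  rw [← Matrix.le_iff, ← Algebra.algebraMap_eq_smul_one]
  exact le_algebraMap_of_spectrum_le hr hA.isSelfAdjoint

lemma dotProduct_smul_one_sub_mulVec (A : Matrix n n ℝ) (r : ℝ) (x : n → ℝ) :
    star x ⬝ᵥ ((r • (1 : Matrix n n ℝ) - A) *ᵥ x) = r * (x ⬝ᵥ x) - x ⬝ᵥ (A *ᵥ x) := by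
  simp only [star_trivial, Matrix.sub_mulVec, Matrix.smul_mulVec, Matrix.one_mulVec,
    dotProduct_sub, dotProduct_smul, smul_eq_mul]

lemma dotProduct_mulVec_le_of_spectrum_le {A : Matrix n n ℝ} (hA : A.IsHermitian) {r : ℝ}
    (hr : ∀ μ ∈ spectrum ℝ A, μ ≤ r) (x : n → ℝ) : x ⬝ᵥ (A *ᵥ x) ≤ r * (x ⬝ᵥ x) := by
  have h := (posSemidef_smul_one_sub_of_spectrum_le hA hr).dotProduct_mulVec_nonneg x
  rw [dotProduct_smul_one_sub_mulVec] at h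
  linarith

lemma dotProduct_mulVec_le_abs {A : Matrix n n ℝ} (hA : ∀ i j, 0 ≤ A i j) (x : n → ℝ) :
    x ⬝ᵥ (A *ᵥ x) ≤ |x| ⬝ᵥ (A *ᵥ |x|) := by
  simp only [dotProduct, Matrix.mulVec, Finset.mul_sum, Pi.abs_apply]
  refine Finset.sum_le_sum fun i _ => Finset.sum_le_sum fun j _ => ?_
  calc x i * (A i j * x j) ≤ |x i * (A i j * x j)| := le_abs_self _
    _ = |x i| * (A i j * |x j|) := by rw [abs_mul, abs_mul, abs_of_nonneg (hA i j)]

lemma mulVec_abs_eq_smul_of_spectrum_le {A : Matrix n n ℝ} (hA : A.IsHermitian)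
    (hA₀ : ∀ i j, 0 ≤ A i j) {r : ℝ} (hr : ∀ μ ∈ spectrum ℝ A, μ ≤ r) {x : n → ℝ}
    (hx : A *ᵥ x = r • x) : A *ᵥ |x| = r • |x| := by
  have habs : |x| ⬝ᵥ |x| = x ⬝ᵥ x := by simp [dotProduct]
  have hray : |x| ⬝ᵥ (A *ᵥ |x|) = r * (|x| ⬝ᵥ |x|) := by
    refine le_antisymm (dotProduct_mulVec_le_of_spectrum_le hA hr _) ?_
    calc r * (|x| ⬝ᵥ |x|) = x ⬝ᵥ (A *ᵥ x) := by rw [habs, hx, dotProduct_smul, smul_eq_mul]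
      _ ≤ |x| ⬝ᵥ (A *ᵥ |x|) := dotProduct_mulVec_le_abs hA₀ x
  have hker := ((posSemidef_smul_one_sub_of_spectrum_le hA hr).dotProduct_mulVec_zero_iff |x|).1
    (by rw [dotProduct_smul_one_sub_mulVec, hray, sub_self])
  rw [Matrix.sub_mulVec, Matrix.smul_mulVec, Matrix.one_mulVec, sub_eq_zero] at hker
  exact hker.symm

end NonnegativeSymmetricMatrices

section SpectralRadius

lemma mem_spectrum_iff_exists_mulVec_eq_smul {n K : Type*} [Fintype n] [Field K]
    {A : Matrix n n K} {μ : K} :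
    μ ∈ spectrum K A ↔ ∃ x : n → K, x ≠ 0 ∧ A *ᵥ x = μ • x := by
  rw [← Matrix.spectrum_toLin', ← Module.End.hasEigenvalue_iff_mem_spectrum]
  refine ⟨fun h => ?_, fun ⟨x, hx₀, hx⟩ => ?_⟩
  · obtain ⟨x, hx⟩ := h.exists_hasEigenvector
    exact ⟨x, hx.2, by simpa using hx.apply_eq_smul⟩
  · exact Module.End.hasEigenvalue_of_hasEigenvector
      (Module.End.hasEigenvector_iff.2 ⟨Module.End.mem_eigenspace_iff.2 (by simpa using hx), hx₀⟩)

lemma adjMatrix_nonneg {V : Type*} (G : SimpleGraph V) [DecidableRel G.Adj] (u v : V) :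
    0 ≤ G.adjMatrix ℝ u v := by
  rw [SimpleGraph.adjMatrix_apply]
  split_ifs <;> simp

lemma isHermitian_adjMatrix {V : Type*} (G : SimpleGraph V) [DecidableRel G.Adj] :
    (G.adjMatrix ℝ).IsHermitian := by
  rw [Matrix.IsHermitian, Matrix.conjTranspose_eq_transpose_of_trivial,
    SimpleGraph.transpose_adjMatrix]

variable {V : Type*} [Fintype V]

lemma adjMatrix_mulVec_eq_sum_filter (G : SimpleGraph V) [DecidableRel G.Adj] (x : V → ℝ) (u : V) :
    (G.adjMatrix ℝ *ᵥ x) u = ∑ v with G.Adj u v, x v := by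
  simp [Matrix.mulVec, dotProduct, SimpleGraph.adjMatrix_apply, Finset.sum_filter]

lemma isGreatest_spectralRad [Nonempty V] (G : SimpleGraph V) [DecidableRel G.Adj] :
    IsGreatest (spectrum ℝ (G.adjMatrix ℝ)) (spectralRad G) := by
  have hρ : spectralRad G = sSup (spectrum ℝ (G.adjMatrix ℝ)) := by
    simp only [spectralRad, ← mem_spectrum_iff_exists_mulVec_eq_smul, Set.ofPred_mem_eq]
    congr!
  have hfin : (spectrum ℝ (G.adjMatrix ℝ)).Finite := Matrix.finite_real_spectrum
  have hne : (spectrum ℝ (G.adjMatrix ℝ)).Nonempty :=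
    ContinuousFunctionalCalculus.spectrum_nonempty _ (isHermitian_adjMatrix G).isSelfAdjoint
  rw [hρ]
  exact ⟨hne.csSup_mem hfin, fun _ => le_csSup hfin.bddAbove⟩

lemma dotProduct_adjMatrix_mulVec_le [Nonempty V] (G : SimpleGraph V) [DecidableRel G.Adj]
    (x : V → ℝ) : x ⬝ᵥ (G.adjMatrix ℝ *ᵥ x) ≤ spectralRad G * (x ⬝ᵥ x) :=
  dotProduct_mulVec_le_of_spectrum_le (isHermitian_adjMatrix G) (isGreatest_spectralRad G).2 x

lemma exists_nonneg_eigenvector_spectralRad [Nonempty V] (G : SimpleGraph V) [DecidableRel G.Adj] :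
    ∃ x : V → ℝ, x ≠ 0 ∧ 0 ≤ x ∧ G.adjMatrix ℝ *ᵥ x = spectralRad G • x := by
  obtain ⟨hmem, hub⟩ := isGreatest_spectralRad G
  obtain ⟨x, hx₀, hx⟩ := mem_spectrum_iff_exists_mulVec_eq_smul.1 hmem
  exact ⟨|x|, fun h => hx₀ (funext fun v => abs_eq_zero.1 (congrFun h v)), abs_nonneg x,
    mulVec_abs_eq_smul_of_spectrum_le (isHermitian_adjMatrix G) (adjMatrix_nonneg G) hub hx⟩

lemma eigenvector_pos_of_connected {G : SimpleGraph V} [DecidableRel G.Adj] (hG : G.Connected)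
    {x : V → ℝ} (hx₀ : x ≠ 0) (hx_nonneg : 0 ≤ x) {μ : ℝ} (hx : G.adjMatrix ℝ *ᵥ x = μ • x)
    (v : V) : 0 < x v := by
  have zero_of_adj {a b : V} (hab : G.Adj a b) (ha : x a = 0) : x b = 0 := by
    have hsum : ∑ w with G.Adj a w, x w = 0 := by
      rw [← adjMatrix_mulVec_eq_sum_filter, hx, Pi.smul_apply, ha, smul_zero]
    exact (Finset.sum_eq_zero_iff_of_nonneg fun w _ => hx_nonneg w).1 hsum b (by simpa using hab)
  refine (hx_nonneg v).lt_of_ne' fun hv => hx₀ (funext fun w => ?_)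
  obtain ⟨p⟩ := hG.preconnected v w
  induction p with
  | nil => exact hv
  | cons hab _ ih => exact ih (zero_of_adj hab hv)

lemma exists_pos_eigenvector_spectralRad {G : SimpleGraph V} [DecidableRel G.Adj]
    (hG : G.Connected) :
    ∃ x : V → ℝ, (∀ v, 0 < x v) ∧ G.adjMatrix ℝ *ᵥ x = spectralRad G • x := by
  have := hG.nonempty
  obtain ⟨x, hx₀, hx_nonneg, hx⟩ := exists_nonneg_eigenvector_spectralRad G
  exact ⟨x, eigenvector_pos_of_connected hG hx₀ hx_nonneg hx, hx⟩

lemma spectralRad_mono [Nonempty V] {G H : SimpleGraph V} (h : G ≤ H) :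
    spectralRad G ≤ spectralRad H := by
  obtain ⟨x, hx₀, hx_nonneg, hx⟩ := exists_nonneg_eigenvector_spectralRad G
  have hle : G.adjMatrix ℝ *ᵥ x ≤ H.adjMatrix ℝ *ᵥ x := fun u => by
    simp only [adjMatrix_mulVec_eq_sum_filter]
    exact Finset.sum_le_sum_of_subset_of_nonneg
      (Finset.monotone_filter_right _ fun v _ huv => h huv) fun v _ _ => hx_nonneg v
  have hpos : 0 < x ⬝ᵥ x := by simpa using Matrix.dotProduct_star_self_pos_iff.2 hx₀
  refine le_of_mul_le_mul_right ?_ hpos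
  calc spectralRad G * (x ⬝ᵥ x) = x ⬝ᵥ (G.adjMatrix ℝ *ᵥ x) := by
        rw [hx, dotProduct_smul, smul_eq_mul]
    _ ≤ x ⬝ᵥ (H.adjMatrix ℝ *ᵥ x) := dotProduct_le_dotProduct_of_nonneg_left hle hx_nonneg
    _ ≤ spectralRad H * (x ⬝ᵥ x) := dotProduct_adjMatrix_mulVec_le H x

lemma dotProduct_adjMatrix_mulVec_comm (G : SimpleGraph V) [DecidableRel G.Adj] (x y : V → ℝ) :
    x ⬝ᵥ (G.adjMatrix ℝ *ᵥ y) = (G.adjMatrix ℝ *ᵥ x) ⬝ᵥ y := by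
  rw [Matrix.dotProduct_mulVec, ← Matrix.mulVec_transpose, SimpleGraph.transpose_adjMatrix]

end SpectralRadius

section WalkCounts

variable {V : Type*} [Fintype V]

lemma walkCount_le_card_pow (G : SimpleGraph V) (k : ℕ) (u : V) :
    walkCount G k u ≤ Fintype.card V ^ k := by
  induction k generalizing u with
  | zero => simp [walkCount]
  | succ k ih =>
    calc walkCount G (k + 1) u ≤ #{v | G.Adj u v} • Fintype.card V ^ k :=
          Finset.sum_le_card_nsmul _ _ _ fun v _ => ih v
      _ ≤ Fintype.card V ^ (k + 1) := by
          rw [smul_eq_mul, pow_succ']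
          exact Nat.mul_le_mul_right _ (Finset.card_le_univ _)

lemma sum_walkCount_mul_le (G : SimpleGraph V) {x : V → ℝ} (hx_nonneg : 0 ≤ x) (k : ℕ) :
    ∑ u, walkCount G k u * x u ≤ (Fintype.card V : ℝ) ^ k * ∑ u, x u := by
  rw [Finset.mul_sum]
  refine Finset.sum_le_sum fun u _ => mul_le_mul_of_nonneg_right ?_ (hx_nonneg u)
  exact_mod_cast walkCount_le_card_pow G k u

lemma adjMatrix_mulVec_walkCount (G : SimpleGraph V) [DecidableRel G.Adj] (k : ℕ) :
    (G.adjMatrix ℝ *ᵥ fun u => (walkCount G k u : ℝ)) = fun u => (walkCount G (k + 1) u : ℝ) := by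
  funext u
  rw [adjMatrix_mulVec_eq_sum_filter, walkCount, Nat.cast_sum]
  congr!

lemma adjMatrix_pow_mulVec_one (G : SimpleGraph V) [DecidableRel G.Adj] (k : ℕ) :
    (G.adjMatrix ℝ ^ k *ᵥ 1) = fun u => (walkCount G k u : ℝ) := by
  induction k with
  | zero => funext u; simp [walkCount]
  | succ k ih => rw [pow_succ', ← Matrix.mulVec_mulVec, ih, adjMatrix_mulVec_walkCount]

lemma totalWalks_eq_sum_adjMatrix_pow (G : SimpleGraph V) [DecidableRel G.Adj] (k : ℕ) :
    (totalWalks G k : ℝ) = ∑ u, ∑ v, (G.adjMatrix ℝ ^ k) u v := by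
  rw [totalWalks, Nat.cast_sum]
  refine Finset.sum_congr rfl fun u _ => ?_
  rw [← congrFun (adjMatrix_pow_mulVec_one G k) u]
  exact dotProduct_one _

lemma totalWalks_zero (G : SimpleGraph V) : totalWalks G 0 = Fintype.card V := by
  simp [totalWalks, walkCount]

open Polynomial in
lemma map_pow_eq_of_aeval_eq_zero {R A B M : Type*} [CommRing R] [Nontrivial R] [Ring A]
    [Algebra R A] [Ring B] [Algebra R B] [AddCommGroup M] [Module R M] {p : R[X]} (hp : p.Monic)
    {a : A} {b : B} (ha : aeval a p = 0) (hb : aeval b p = 0) (f : A →ₗ[R] M) (g : B →ₗ[R] M)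
    (h : ∀ i < p.natDegree, f (a ^ i) = g (b ^ i)) (k : ℕ) : f (a ^ k) = g (b ^ k) := by
  have hmem : X ^ k %ₘ p ∈ degreeLT R p.natDegree :=
    mem_degreeLT.2 ((degree_modByMonic_lt _ hp).trans_eq (degree_eq_natDegree hp.ne_zero))
  rw [degreeLT_eq_span_X_pow] at hmem
  have heqOn : Set.EqOn (f ∘ₗ (aeval a).toLinearMap) (g ∘ₗ (aeval b).toLinearMap)
      ((Finset.range p.natDegree).image fun i => (X ^ i : R[X])) := by
    rintro q hq
    obtain ⟨i, hi, rfl⟩ := Finset.mem_image.1 (Finset.mem_coe.1 hq)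
    simpa using h i (Finset.mem_range.1 hi)
  simpa [aeval_modByMonic_eq_self_of_root ha, aeval_modByMonic_eq_self_of_root hb]
    using LinearMap.eqOn_span heqOn hmem

lemma totalWalks_eq_of_forall_lt {W : Type*} [Fintype W] {G : SimpleGraph V} {H : SimpleGraph W}
    (h : ∀ i < Fintype.card V + Fintype.card W, totalWalks G i = totalWalks H i) (k : ℕ) :
    totalWalks G k = totalWalks H k := by
  have hG := (G.adjMatrix ℝ).charpoly_monic
  have hH := (H.adjMatrix ℝ).charpoly_monic
  have key := map_pow_eq_of_aeval_eq_zero (hG.mul hH) (a := G.adjMatrix ℝ) (b := H.adjMatrix ℝ)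
    (by rw [map_mul, Matrix.aeval_self_charpoly, zero_mul])
    (by rw [map_mul, Matrix.aeval_self_charpoly, mul_zero])
    (∑ u, ∑ v, Matrix.entryLinearMap ℝ ℝ u v) (∑ u, ∑ v, Matrix.entryLinearMap ℝ ℝ u v)
  simp only [hG.natDegree_mul hH, Matrix.charpoly_natDegree_eq_dim, LinearMap.sum_apply,
    Matrix.entryLinearMap_apply, ← totalWalks_eq_sum_adjMatrix_pow, Nat.cast_inj] at key
  exact key h k

/-- `H₁ ≻ H₂`: the graph `H₁` is strictly walk-preferable to `H₂`, i.e. it has more walks of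
the smallest length `ℓ ≥ 1` for which the two walk counts differ. -/
def StrictlyWalkPreferable (H₁ H₂ : SimpleGraph V) : Prop :=
  ∃ ℓ : ℕ, 1 ≤ ℓ ∧ totalWalks H₂ ℓ < totalWalks H₁ ℓ ∧
    ∀ i : ℕ, 1 ≤ i → i ≤ ℓ - 1 → totalWalks H₁ i = totalWalks H₂ i

lemma StrictlyWalkPreferable.exists_lt_two_mul_card {H₁ H₂ : SimpleGraph V}
    (h : StrictlyWalkPreferable H₁ H₂) :
    ∃ ℓ < 2 * Fintype.card V, totalWalks H₂ ℓ < totalWalks H₁ ℓ ∧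
      ∀ i < ℓ, totalWalks H₁ i = totalWalks H₂ i := by
  obtain ⟨ℓ, -, hlt, heq⟩ := h
  have heq' : ∀ i < ℓ, totalWalks H₁ i = totalWalks H₂ i := by
    rintro (_ | i) hi
    · rw [totalWalks_zero, totalWalks_zero]
    · exact heq _ (by omega) (by omega)
  refine ⟨ℓ, ?_, hlt, heq'⟩
  by_contra! hℓ
  exact hlt.ne' (totalWalks_eq_of_forall_lt (fun i hi => heq' i (by omega)) ℓ)

end WalkCounts

section Resolvent

variable {V : Type*} [Fintype V] {G : SimpleGraph V} [DecidableRel G.Adj] {x : V → ℝ}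
  {ρ c : ℝ}

lemma mul_sum_walkCount_mul (hx : ∀ u, ρ * x u = c + (G.adjMatrix ℝ *ᵥ x) u) (k : ℕ) :
    ρ * ∑ u, walkCount G k u * x u =
      c * totalWalks G k + ∑ u, walkCount G (k + 1) u * x u := by
  have hsymm := dotProduct_adjMatrix_mulVec_comm G (fun u => (walkCount G k u : ℝ)) x
  rw [adjMatrix_mulVec_walkCount] at hsymm
  calc ρ * ∑ u, walkCount G k u * x u = ∑ u, walkCount G k u * (ρ * x u) := by
        rw [Finset.mul_sum]
        exact Finset.sum_congr rfl fun u _ => by ring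
    _ = ∑ u, c * walkCount G k u + ∑ u, walkCount G k u * (G.adjMatrix ℝ *ᵥ x) u := by
        rw [← Finset.sum_add_distrib]
        exact Finset.sum_congr rfl fun u _ => by rw [hx]; ring
    _ = c * totalWalks G k + ∑ u, walkCount G (k + 1) u * x u := by
        rw [← Finset.mul_sum, totalWalks, Nat.cast_sum]
        exact congrArg _ hsymm

lemma sum_eq_sum_totalWalks_div_pow_add (hρ : ρ ≠ 0)
    (hx : ∀ u, ρ * x u = c + (G.adjMatrix ℝ *ᵥ x) u) (k : ℕ) :
    ∑ u, x u = c * ∑ i ∈ range k, (totalWalks G i : ℝ) / ρ ^ (i + 1)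
      + (∑ u, walkCount G k u * x u) / ρ ^ k := by
  induction k with
  | zero => simp [walkCount]
  | succ k ih =>
    have hstep : (∑ u, walkCount G k u * x u) / ρ ^ k = c * (totalWalks G k / ρ ^ (k + 1))
        + (∑ u, walkCount G (k + 1) u * x u) / ρ ^ (k + 1) := by
      rw [← mul_div_assoc, ← add_div, ← mul_sum_walkCount_mul hx k, pow_succ',
        mul_div_mul_left _ _ hρ]
    rw [ih, hstep, Finset.sum_range_succ, mul_add, add_assoc]

lemma sum_walkCount_mul_lt (hc : 0 < c) (hx_nonneg : 0 ≤ x)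
    (hx : ∀ u, ρ * x u = c + (G.adjMatrix ℝ *ᵥ x) u) {k : ℕ}
    (hρ : Fintype.card V + (Fintype.card V : ℝ) ^ (k + 1) < ρ) :
    ∑ u, walkCount G k u * x u < c := by
  set t : ℝ := (Fintype.card V : ℝ)
  have htk : 0 ≤ t ^ (k + 1) := by positivity
  have hmass : (ρ - t) * ∑ u, x u ≤ c * t := by
    have h₀ := mul_sum_walkCount_mul hx 0
    have h₁ := sum_walkCount_mul_le G hx_nonneg 1
    simp only [walkCount, Nat.cast_one, one_mul, totalWalks_zero, pow_one] at h₀ h₁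
    linarith
  refine lt_of_mul_lt_mul_left ?_ (show 0 ≤ ρ - t by linarith)
  calc (ρ - t) * ∑ u, walkCount G k u * x u ≤ (ρ - t) * (t ^ k * ∑ u, x u) :=
        mul_le_mul_of_nonneg_left (sum_walkCount_mul_le G hx_nonneg k) (by linarith)
    _ = t ^ k * ((ρ - t) * ∑ u, x u) := by ring
    _ ≤ t ^ k * (c * t) := by gcongr
    _ = t ^ (k + 1) * c := by ring
    _ < (ρ - t) * c := mul_lt_mul_of_pos_right (by linarith) hc

lemma mul_sum_totalWalks_div_pow_le (hρ : 0 < ρ) (hx_nonneg : 0 ≤ x)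
    (hx : ∀ u, ρ * x u = c + (G.adjMatrix ℝ *ᵥ x) u) (k : ℕ) :
    c * ∑ i ∈ range k, (totalWalks G i : ℝ) / ρ ^ (i + 1) ≤ ∑ u, x u := by
  rw [sum_eq_sum_totalWalks_div_pow_add hρ.ne' hx k]
  have hrem : 0 ≤ ∑ u, walkCount G k u * x u :=
    Finset.sum_nonneg fun u _ => mul_nonneg (Nat.cast_nonneg _) (hx_nonneg u)
  exact le_add_of_nonneg_right (by positivity)

lemma sum_lt_mul_sum_totalWalks_div_pow (hc : 0 < c) (hx_nonneg : 0 ≤ x)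
    (hx : ∀ u, ρ * x u = c + (G.adjMatrix ℝ *ᵥ x) u) {k : ℕ}
    (hρ : Fintype.card V + (Fintype.card V : ℝ) ^ (k + 1) < ρ) :
    ∑ u, x u < c * (∑ i ∈ range k, (totalWalks G i : ℝ) / ρ ^ (i + 1) + 1 / ρ ^ k) := by
  have hρ₀ : 0 < ρ := lt_of_le_of_lt (by positivity) hρ
  rw [sum_eq_sum_totalWalks_div_pow_add hρ₀.ne' hx k, mul_add, mul_one_div]
  gcongr
  exact sum_walkCount_mul_lt hc hx_nonneg hx hρ

lemma sum_totalWalks_div_pow_add_le {H₁ H₂ : SimpleGraph V} {ℓ : ℕ}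
    (heq : ∀ i < ℓ, totalWalks H₁ i = totalWalks H₂ i) (hlt : totalWalks H₂ ℓ < totalWalks H₁ ℓ)
    {ρ₁ ρ₂ : ℝ} (hρ₁ : 0 < ρ₁) (hρ : ρ₁ ≤ ρ₂) :
    ∑ i ∈ range (ℓ + 1), (totalWalks H₂ i : ℝ) / ρ₂ ^ (i + 1) + 1 / ρ₂ ^ (ℓ + 1) ≤
      ∑ i ∈ range (ℓ + 1), (totalWalks H₁ i : ℝ) / ρ₁ ^ (i + 1) := by
  have hlt' : (totalWalks H₂ ℓ : ℝ) + 1 ≤ totalWalks H₁ ℓ := by exact_mod_cast hlt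
  have := hρ₁.trans_le hρ
  rw [Finset.sum_range_succ, Finset.sum_range_succ, add_assoc, ← add_div]
  gcongr with i hi
  exact (heq i (Finset.mem_range.1 hi)).ge

lemma StrictlyWalkPreferable.mul_sum_lt_mul_sum {H₁ H₂ : SimpleGraph V}
    [DecidableRel H₁.Adj] [DecidableRel H₂.Adj] (h : StrictlyWalkPreferable H₁ H₂)
    {ρ₁ ρ₂ c₁ c₂ : ℝ} {x₁ x₂ : V → ℝ} (hρ₁ : 0 < ρ₁) (hρ : ρ₁ ≤ ρ₂)
    (hρ₂ : Fintype.card V + (Fintype.card V : ℝ) ^ (2 * Fintype.card V + 1) < ρ₂)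
    (hc₁ : 0 < c₁) (hc₂ : 0 < c₂) (hx₁_nonneg : 0 ≤ x₁) (hx₂_nonneg : 0 ≤ x₂)
    (hx₁ : ∀ u, ρ₁ * x₁ u = c₁ + (H₁.adjMatrix ℝ *ᵥ x₁) u)
    (hx₂ : ∀ u, ρ₂ * x₂ u = c₂ + (H₂.adjMatrix ℝ *ᵥ x₂) u) :
    c₁ * ∑ u, x₂ u < c₂ * ∑ u, x₁ u := by
  obtain ⟨ℓ, hℓ, hlt, heq⟩ := h.exists_lt_two_mul_card
  have hcard : (1 : ℝ) ≤ Fintype.card V := by exact_mod_cast (by omega : 1 ≤ Fintype.card V)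
  have hρ₂ℓ : Fintype.card V + (Fintype.card V : ℝ) ^ (ℓ + 1 + 1) < ρ₂ := by
    refine lt_of_le_of_lt ?_ hρ₂
    gcongr
    omega
  calc c₁ * ∑ u, x₂ u
      < c₁ * (c₂ * (∑ i ∈ range (ℓ + 1), (totalWalks H₂ i : ℝ) / ρ₂ ^ (i + 1)
          + 1 / ρ₂ ^ (ℓ + 1))) := by
        gcongr
        exact sum_lt_mul_sum_totalWalks_div_pow hc₂ hx₂_nonneg hx₂ hρ₂ℓ
    _ ≤ c₁ * (c₂ * ∑ i ∈ range (ℓ + 1), (totalWalks H₁ i : ℝ) / ρ₁ ^ (i + 1)) := by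
        gcongr
        exact sum_totalWalks_div_pow_add_le heq hlt hρ₁ hρ
    _ = c₂ * (c₁ * ∑ i ∈ range (ℓ + 1), (totalWalks H₁ i : ℝ) / ρ₁ ^ (i + 1)) := by ring
    _ ≤ c₂ * ∑ u, x₁ u := by
        gcongr
        exact mul_sum_totalWalks_div_pow_le hρ₁ hx₁_nonneg hx₁ _

end Resolvent

section SupportedGraphs

variable {V : Type*} [Fintype V] {H : SimpleGraph V} {T : Finset V}

lemma sum_filter_adj_eq_sum_subtype [DecidableRel H.Adj] {M : Type*} [AddCommMonoid M]
    (hH : H.support ⊆ T) (f : V → M) (u : T) :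
    ∑ v with H.Adj u v, f v = ∑ v : T with (H.comap (↑)).Adj u v, f v := by
  rw [Finset.sum_filter, Finset.sum_filter]
  refine (Finset.sum_subset (Finset.subset_univ T) fun v _ hv =>
    if_neg fun huv => hv (hH huv.mem_support_right)).symm.trans ?_
  exact (Finset.sum_coe_sort T _).symm

lemma adjMatrix_mulVec_eq_adjMatrix_comap_mulVec [DecidableRel H.Adj] (hH : H.support ⊆ T)
    (x : V → ℝ) (u : T) :
    (H.adjMatrix ℝ *ᵥ x) u = ((H.comap ((↑) : T → V)).adjMatrix ℝ *ᵥ fun v => x v) u := by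
  rw [adjMatrix_mulVec_eq_sum_filter, adjMatrix_mulVec_eq_sum_filter,
    sum_filter_adj_eq_sum_subtype hH]

lemma adjMatrix_mulVec_eq_zero_of_notMem_support [DecidableRel H.Adj] {v : V} (hv : v ∉ H.support)
    (x : V → ℝ) :
    (H.adjMatrix ℝ *ᵥ x) v = 0 := by
  rw [adjMatrix_mulVec_eq_sum_filter, Finset.filter_false_of_mem, Finset.sum_empty]
  exact fun w _ hvw => hv hvw.mem_support_left

lemma walkCount_comap_subtype (hH : H.support ⊆ T) (k : ℕ) (u : T) :
    walkCount (H.comap ((↑) : T → V)) k u = walkCount H k u := by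
  induction k generalizing u with
  | zero => rfl
  | succ k ih =>
    simp only [walkCount, ih]
    convert (sum_filter_adj_eq_sum_subtype hH (walkCount H k) u).symm

lemma totalWalks_comap_subtype (hH : H.support ⊆ T) {k : ℕ} (hk : 1 ≤ k) :
    totalWalks (H.comap ((↑) : T → V)) k = totalWalks H k := by
  obtain ⟨k, rfl⟩ := Nat.exists_eq_add_of_le' hk
  simp only [totalWalks, walkCount_comap_subtype hH]
  rw [Finset.sum_coe_sort T fun u => walkCount H (k + 1) u]
  refine Finset.sum_subset (Finset.subset_univ T) fun v _ hv => ?_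
  rw [walkCount, Finset.filter_false_of_mem, Finset.sum_empty]
  exact fun w _ hvw => hv (hH hvw.mem_support_left)

lemma StrictlyWalkPreferable.comap_subtype {H₁ H₂ : SimpleGraph V}
    (h : StrictlyWalkPreferable H₁ H₂) (hH₁ : H₁.support ⊆ T) (hH₂ : H₂.support ⊆ T) :
    StrictlyWalkPreferable (H₁.comap ((↑) : T → V)) (H₂.comap ((↑) : T → V)) := by
  obtain ⟨ℓ, hℓ, hlt, heq⟩ := h
  refine ⟨ℓ, hℓ, ?_, fun i hi hiℓ => ?_⟩
  · rwa [totalWalks_comap_subtype hH₁ hℓ, totalWalks_comap_subtype hH₂ hℓ]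
  · rw [totalWalks_comap_subtype hH₁ hi, totalWalks_comap_subtype hH₂ hi, heq i hi hiℓ]

end SupportedGraphs

section Embedding

lemma disjoint_of_neighborSet_eq {V : Type*} {G H : SimpleGraph V} {S T : Finset V}
    (hT : ∀ u ∈ T, G.neighborSet u = S) (hH : H.support ⊆ T) :
    Disjoint G H := by
  refine SimpleGraph.disjoint_left.2 fun u v hG hHuv => ?_
  have hv : v ∈ T := hH hHuv.mem_support_right
  have hvS : v ∈ G.neighborSet u := hG
  rw [hT u (hH hHuv.mem_support_left), ← hT v hv] at hvS
  exact G.loopless.irrefl v hvS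

variable {V : Type*} [Fintype V] {G H : SimpleGraph V} [DecidableRel G.Adj] [DecidableRel H.Adj]
  {S T : Finset V} {x : V → ℝ} {ρ : ℝ}

lemma adjMatrix_sup_mulVec_of_disjoint (h : Disjoint G H) (x : V → ℝ) :
    (G ⊔ H).adjMatrix ℝ *ᵥ x = G.adjMatrix ℝ *ᵥ x + H.adjMatrix ℝ *ᵥ x := by
  funext u
  rw [Pi.add_apply]
  simp only [adjMatrix_mulVec_eq_sum_filter, SimpleGraph.sup_adj]
  rw [Finset.filter_or, Finset.sum_union]
  exact Finset.disjoint_filter.2 fun v _ hG hH =>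
    SimpleGraph.disjoint_left.1 h _ _ hG hH

lemma adjMatrix_mulVec_eq_sum_of_neighborSet_eq {u : V} (hu : G.neighborSet u = S) (x : V → ℝ) :
    (G.adjMatrix ℝ *ᵥ x) u = ∑ v ∈ S, x v := by
  rw [adjMatrix_mulVec_eq_sum_filter]
  refine Finset.sum_congr (Finset.ext fun v => ?_) fun _ _ => rfl
  rw [Finset.mem_filter_univ, ← SimpleGraph.mem_neighborSet, hu, Finset.mem_coe]

lemma eigenvector_sup_apply_of_notMem (hT : ∀ u ∈ T, G.neighborSet u = S) (hH : H.support ⊆ T)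
    (hx : (G ⊔ H).adjMatrix ℝ *ᵥ x = ρ • x) {v : V} (hv : v ∉ T) :
    (G.adjMatrix ℝ *ᵥ x) v = ρ * x v := by
  have hv' := congrFun hx v
  rwa [adjMatrix_sup_mulVec_of_disjoint (disjoint_of_neighborSet_eq hT hH), Pi.add_apply,
    adjMatrix_mulVec_eq_zero_of_notMem_support (fun h => hv (hH h)), add_zero] at hv'

lemma eigenvector_sup_apply_subtype (hT : ∀ u ∈ T, G.neighborSet u = S) (hH : H.support ⊆ T)
    (hx : (G ⊔ H).adjMatrix ℝ *ᵥ x = ρ • x) (u : T) :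
    ρ * x u = ∑ v ∈ S, x v + ((H.comap ((↑) : T → V)).adjMatrix ℝ *ᵥ fun v => x v) u := by
  rw [← adjMatrix_mulVec_eq_sum_of_neighborSet_eq (hT u u.2),
    ← adjMatrix_mulVec_eq_adjMatrix_comap_mulVec hH, ← Pi.add_apply,
    ← adjMatrix_sup_mulVec_of_disjoint (disjoint_of_neighborSet_eq hT hH)]
  exact (congrFun hx u).symm

lemma dotProduct_adjMatrix_mulVec_eq_of_neighborSet_eq (hT : ∀ u ∈ T, G.neighborSet u = S)
    (hx : ∀ v ∉ T, (G.adjMatrix ℝ *ᵥ x) v = ρ * x v) (y : V → ℝ) :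
    y ⬝ᵥ (G.adjMatrix ℝ *ᵥ x) = (∑ v ∈ T, y v) * ∑ v ∈ S, x v + ρ * ∑ v ∈ Tᶜ, y v * x v := by
  rw [dotProduct, ← Finset.sum_add_sum_compl T, Finset.sum_mul, Finset.mul_sum]
  congr 1
  · exact Finset.sum_congr rfl fun v hv => by
      rw [adjMatrix_mulVec_eq_sum_of_neighborSet_eq (hT v hv)]
  · exact Finset.sum_congr rfl fun v hv => by
      rw [hx v (Finset.mem_compl.1 hv), mul_left_comm]

lemma sub_mul_sum_compl_eq (hT : ∀ u ∈ T, G.neighborSet u = S) {x₁ x₂ : V → ℝ} {ρ₁ ρ₂ : ℝ}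
    (hx₁ : ∀ v ∉ T, (G.adjMatrix ℝ *ᵥ x₁) v = ρ₁ * x₁ v)
    (hx₂ : ∀ v ∉ T, (G.adjMatrix ℝ *ᵥ x₂) v = ρ₂ * x₂ v) :
    (ρ₁ - ρ₂) * ∑ v ∈ Tᶜ, x₁ v * x₂ v =
      (∑ v ∈ T, x₁ v) * ∑ v ∈ S, x₂ v - (∑ v ∈ S, x₁ v) * ∑ v ∈ T, x₂ v := by
  have h := dotProduct_adjMatrix_mulVec_comm G x₁ x₂
  rw [dotProduct_comm (G.adjMatrix ℝ *ᵥ x₁),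
    dotProduct_adjMatrix_mulVec_eq_of_neighborSet_eq hT hx₁,
    dotProduct_adjMatrix_mulVec_eq_of_neighborSet_eq hT hx₂] at h
  simp only [mul_comm (x₂ _) (x₁ _)] at h
  linarith

end Embedding

theorem stmt_1_general {V : Type*} [Fintype V] {G H₁ H₂ : SimpleGraph V} {S T : Finset V}
    (hG : G.Connected) (hS : S.Nonempty) (hT : ∀ u ∈ T, G.neighborSet u = S)
    (hH₁ : H₁.support ⊆ T) (hH₂ : H₂.support ⊆ T)
    (hρ : #T + (#T : ℝ) ^ (2 * #T + 1) < spectralRad G) (h : StrictlyWalkPreferable H₁ H₂) :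
    spectralRad (G ⊔ H₂) < spectralRad (G ⊔ H₁) := by
  have := hG.nonempty
  obtain ⟨x₁, hx₁_pos, hx₁⟩ := exists_pos_eigenvector_spectralRad (hG.mono (le_sup_left (b := H₁)))
  obtain ⟨x₂, hx₂_pos, hx₂⟩ := exists_pos_eigenvector_spectralRad (hG.mono (le_sup_left (b := H₂)))
  by_contra! hle
  have hρ₁ : 0 < spectralRad (G ⊔ H₁) :=
    (lt_of_le_of_lt (by positivity) hρ).trans_le (spectralRad_mono le_sup_left)
  have hcompare : (∑ v ∈ S, x₁ v) * ∑ v ∈ T, x₂ v < (∑ v ∈ S, x₂ v) * ∑ v ∈ T, x₁ v := by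
    simpa only [Finset.sum_coe_sort] using (h.comap_subtype hH₁ hH₂).mul_sum_lt_mul_sum hρ₁ hle
      (by simpa only [Fintype.card_coe] using hρ.trans_le (spectralRad_mono le_sup_left))
      (Finset.sum_pos (fun v _ => hx₁_pos v) hS) (Finset.sum_pos (fun v _ => hx₂_pos v) hS)
      (fun v => (hx₁_pos v).le) (fun v => (hx₂_pos v).le)
      (eigenvector_sup_apply_subtype hT hH₁ hx₁) (eigenvector_sup_apply_subtype hT hH₂ hx₂)
  have hpairing := sub_mul_sum_compl_eq hT
    (fun _ => eigenvector_sup_apply_of_notMem hT hH₁ hx₁)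
    (fun _ => eigenvector_sup_apply_of_notMem hT hH₂ hx₂)
  have hnonpos := mul_nonpos_of_nonpos_of_nonneg (sub_nonpos.2 hle)
    (Finset.sum_nonneg fun v (_ : v ∈ Tᶜ) => (mul_pos (hx₁_pos v) (hx₂_pos v)).le)
  linarith

/-- If `H₁` is strictly walk-preferable to `H₂`, then the graph obtained
from `G` by embedding the edges of `H₁` has strictly larger spectral radius than the one
obtained by embedding the edges of `H₂`, provided `ρ(G)` is large enough in terms of `|T|`. -/
theorem stmt_1 (t : ℕ) :
    ∃ R : ℝ, ∀ (V : Type) [Fintype V], ∀ (G H₁ H₂ : SimpleGraph V) (S T : Finset V),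
      G.Connected →
      1 ≤ S.card → S.card < Fintype.card V →
      T.card = t →
      (∀ u ∈ T, u ∉ S) →
      (∀ u ∈ T, ∀ v, v ∉ S → ¬ G.Adj u v) →
      (∀ u ∈ T, ∀ s ∈ S, G.Adj u s) →
      (∀ u v, H₁.Adj u v → u ∈ T ∧ v ∈ T) →
      (∀ u v, H₂.Adj u v → u ∈ T ∧ v ∈ T) →
      spectralRad G > R →
      (∃ ℓ : ℕ, 1 ≤ ℓ ∧ totalWalks H₂ ℓ < totalWalks H₁ ℓ ∧
        ∀ i : ℕ, 1 ≤ i → i ≤ ℓ - 1 → totalWalks H₁ i = totalWalks H₂ i) →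
      spectralRad (G ⊔ H₂) < spectralRad (G ⊔ H₁) := by
  refine ⟨t + (t : ℝ) ^ (2 * t + 1), ?_⟩
  rintro V _ G H₁ H₂ S T hG hS - rfl - hiso hjoin hH₁ hH₂ hρ h
  exact stmt_1_general hG (Finset.card_pos.1 hS)
    (fun u hu => Set.ext fun v => ⟨fun huv => by_contra fun hv => hiso u hu v hv huv, hjoin u hu v⟩)
    (fun u ⟨v, huv⟩ => (hH₁ u v huv).1) (fun u ⟨v, huv⟩ => (hH₂ u v huv).1) hρ h
end

section
/- Let $G$ be a connected graph of order $n$, let $S \subseteq V(G)$ with $1 \le |S| < n$, and let $H$ be a connected component of $G - S$ with maximum degree at most $\Delta$ such that every vertex of $H$ is adjacent in $G$ to every vertex of $S$. Let $\rho = \rho(G)$ and let $\mathbf{x} = (x_v)_{v \in V(G)}$ be the Perron vector of $G$ normalized so that $\sum_{v \in S} x_v = \rho$. If $\rho > \Delta$, then for every vertex $u$ of $H$ and every integer $\ell \ge 1$, $x_u \le \left(1 + \sum_{i=1}^{\ell} \frac{w^{i}_H(u)}{\rho^{i}}\right) + \frac{\Delta}{\rho - \Delta} \cdot \frac{w^{\ell}_H(u)}{\rho^{\ell}}$.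 -/
open Finset Matrix SimpleGraph
open scoped Classical

/-!
Since every vertex of `H` sees all of `S` and `∑_{v ∈ S} x_v = ρ`, the eigenvalue equation on `H`
reads `x_u = 1 + ρ⁻¹ ∑_{v ∼ u} x_v`, the sum being over the neighbours of `u` in `H`. Evaluated at
a maximum of `x` on `H`, it gives the uniform bound `x ≤ ρ / (ρ - Δ) = 1 + Δ / (ρ - Δ)`.
Substituting this bound into the equation `ℓ` times makes the walks of length `ℓ` appear, because
each substitution prolongs every walk by one edge.
-/

section NeighborSums

variable {V K : Type*} {G H : SimpleGraph V}

theorem sum_neighborFinset_eq_sum_add_sum {M : Type*} [AddCommMonoid M] [G.LocallyFinite]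
    [H.LocallyFinite] {S : Finset V} {u : V} (hadj : ∀ v, G.Adj u v ↔ v ∈ S ∨ H.Adj u v)
    (hdisj : ∀ v, H.Adj u v → v ∉ S) (f : V → M) :
    ∑ v ∈ G.neighborFinset u, f v = ∑ v ∈ S, f v + ∑ v ∈ H.neighborFinset u, f v := by
  have hunion : G.neighborFinset u = S ∪ H.neighborFinset u := by
    ext v
    simp only [mem_neighborFinset, mem_union, hadj]
  have hdisjoint : Disjoint S (H.neighborFinset u) :=
    disjoint_right.2 fun v hv => hdisj v ((H.mem_neighborFinset u v).1 hv)
  rw [hunion, sum_union hdisjoint]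

theorem eq_one_add_sum_neighborFinset_div [Fintype V] [Field K] {S : Finset V} {u : V} {ρ : K}
    {x : V → K} (hadj : ∀ v, G.Adj u v ↔ v ∈ S ∨ H.Adj u v) (hdisj : ∀ v, H.Adj u v → v ∉ S)
    (hρ : ρ ≠ 0) (heig : G.adjMatrix K *ᵥ x = ρ • x) (hnorm : ∑ v ∈ S, x v = ρ) :
    x u = 1 + (∑ v ∈ H.neighborFinset u, x v) / ρ := by
  have heig_u : ρ * x u = ρ + ∑ v ∈ H.neighborFinset u, x v := by
    rw [← smul_eq_mul, ← Pi.smul_apply, ← heig, adjMatrix_mulVec_apply,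
      sum_neighborFinset_eq_sum_add_sum hadj hdisj, hnorm]
  rw [one_add_div hρ, eq_div_iff hρ, mul_comm, heig_u]

variable [Field K] [LinearOrder K] [IsStrictOrderedRing K] {ρ : K} {x : V → K}

theorem le_div_sub_of_le_one_add_sum_neighborFinset_div [H.LocallyFinite] {T : Finset V} {Δ : ℕ}
    (hT : ∀ u ∈ T, ∀ v, H.Adj u v → v ∈ T) (hΔ : ∀ u ∈ T, H.degree u ≤ Δ) (hρ : Δ < ρ)
    (hx : ∀ u ∈ T, x u ≤ 1 + (∑ v ∈ H.neighborFinset u, x v) / ρ) :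
    ∀ u ∈ T, x u ≤ ρ / (ρ - Δ) := by
  intro u hu
  have hρ_pos : 0 < ρ := Δ.cast_nonneg.trans_lt hρ
  have hgap : 0 < ρ - Δ := sub_pos.2 hρ
  obtain ⟨m, hm, hmax⟩ := T.exists_max_image x ⟨u, hu⟩
  refine (hmax u hu).trans ?_
  rcases le_total (x m) 0 with hneg | hpos
  · exact hneg.trans (div_pos hρ_pos hgap).le
  have hsum : ∑ v ∈ H.neighborFinset m, x v ≤ Δ * x m := calc
    ∑ v ∈ H.neighborFinset m, x v ≤ H.degree m • x m :=
      sum_le_card_nsmul _ _ _ fun v hv => hmax v (hT m hm v ((H.mem_neighborFinset m v).1 hv))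
    _ ≤ Δ • x m := nsmul_le_nsmul_left hpos (hΔ m hm)
    _ = Δ * x m := nsmul_eq_mul _ _
  have hxm : x m * ρ ≤ ρ + ∑ v ∈ H.neighborFinset m, x v := by
    rw [← le_div_iff₀ hρ_pos, ← one_add_div hρ_pos.ne']
    exact hx m hm
  rw [le_div_iff₀ hgap]
  linarith

end NeighborSums

section Walks

variable {V K : Type*} [Fintype V] [Field K] {H : SimpleGraph V}

theorem walkCount_succ_div_pow (ρ : K) (ℓ : ℕ) (u : V) :
    (walkCount H (ℓ + 1) u : K) / ρ ^ (ℓ + 1)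
      = (∑ v ∈ H.neighborFinset u, (walkCount H ℓ v : K) / ρ ^ ℓ) / ρ := by
  rw [walkCount, ← neighborFinset_eq_filter, Nat.cast_sum, ← sum_div, div_div, pow_succ]

theorem one_add_sum_neighborFinset_walkCount_div (ρ C : K) (ℓ : ℕ) (u : V) :
    1 + (∑ v ∈ H.neighborFinset u,
        (∑ i ∈ range ℓ, (walkCount H i v : K) / ρ ^ i + C * ((walkCount H ℓ v : K) / ρ ^ ℓ))) / ρ
      = ∑ i ∈ range (ℓ + 1), (walkCount H i u : K) / ρ ^ i
        + C * ((walkCount H (ℓ + 1) u : K) / ρ ^ (ℓ + 1)) := by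
  have hzero : (walkCount H 0 u : K) / ρ ^ 0 = 1 := by
    rw [walkCount, Nat.cast_one, pow_zero, div_one]
  simp only [sum_range_succ', walkCount_succ_div_pow, hzero]
  rw [sum_add_distrib, sum_comm, ← mul_sum, ← sum_div (range ℓ)]
  ring

theorem le_sum_walkCount_div_pow_add [LinearOrder K] [IsStrictOrderedRing K] {T : Set V}
    {ρ C : K} {x : V → K} (hT : ∀ u ∈ T, ∀ v, H.Adj u v → v ∈ T) (hρ : 0 ≤ ρ)
    (hx : ∀ u ∈ T, x u ≤ 1 + (∑ v ∈ H.neighborFinset u, x v) / ρ) (hC : ∀ u ∈ T, x u ≤ C)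
    (ℓ : ℕ) : ∀ u ∈ T, x u ≤ ∑ i ∈ range ℓ, (walkCount H i u : K) / ρ ^ i
      + C * ((walkCount H ℓ u : K) / ρ ^ ℓ) := by
  induction ℓ with
  | zero => simpa [walkCount] using hC
  | succ ℓ ih =>
    intro u hu
    rw [← one_add_sum_neighborFinset_walkCount_div]
    refine (hx u hu).trans ?_
    gcongr with v hv
    exact ih v (hT u hu v ((H.mem_neighborFinset u v).1 hv))

end Walks

theorem stmt_5_general {V K : Type*} [Fintype V] [Field K] [LinearOrder K]
    [IsStrictOrderedRing K] (G H : SimpleGraph V) (S T : Finset V) (Δ : ℕ) (ρ : K) (x : V → K)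
    (hH : ∀ u v, H.Adj u v ↔ (u ∈ T ∧ v ∈ T ∧ G.Adj u v))
    (hTS : ∀ u ∈ T, u ∉ S)
    (hclosed : ∀ u ∈ T, ∀ v, G.Adj u v → v ∈ S ∨ v ∈ T)
    (hΔ : ∀ u, H.degree u ≤ Δ)
    (hfull : ∀ u ∈ T, ∀ s ∈ S, G.Adj u s)
    (hρΔ : Δ < ρ)
    (heig : G.adjMatrix K *ᵥ x = ρ • x)
    (hnorm : ∑ v ∈ S, x v = ρ) :
    ∀ u ∈ T, ∀ ℓ : ℕ,
      x u ≤ (1 + ∑ i ∈ range ℓ, (walkCount H (i + 1) u : K) / ρ ^ (i + 1))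
        + ((Δ : K) / (ρ - Δ)) * ((walkCount H ℓ u : K) / ρ ^ ℓ) := by
  intro u hu ℓ
  have hρ : 0 < ρ := Δ.cast_nonneg.trans_lt hρΔ
  have hT : ∀ u ∈ T, ∀ v, H.Adj u v → v ∈ T := fun u _ v huv => ((hH u v).1 huv).2.1
  have hadj : ∀ u ∈ T, ∀ v, G.Adj u v ↔ v ∈ S ∨ H.Adj u v := by grind
  have hx : ∀ u ∈ T, x u ≤ 1 + (∑ v ∈ H.neighborFinset u, x v) / ρ := fun u hu =>
    (eq_one_add_sum_neighborFinset_div (hadj u hu) (fun v huv => hTS v (hT u hu v huv)) hρ.ne'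
      heig hnorm).le
  have hC := le_div_sub_of_le_one_add_sum_neighborFinset_div hT (fun u _ => hΔ u) hρΔ hx
  have hconst : ρ / (ρ - Δ) = 1 + Δ / (ρ - Δ) := by
    rw [one_add_div (sub_pos.2 hρΔ).ne', sub_add_cancel]
  calc x u ≤ ∑ i ∈ range ℓ, (walkCount H i u : K) / ρ ^ i
        + ρ / (ρ - Δ) * ((walkCount H ℓ u : K) / ρ ^ ℓ) :=
      le_sum_walkCount_div_pow_add (T := T) hT hρ.le hx hC ℓ u hu
    _ = ∑ i ∈ range (ℓ + 1), (walkCount H i u : K) / ρ ^ i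
        + Δ / (ρ - Δ) * ((walkCount H ℓ u : K) / ρ ^ ℓ) := by
      rw [hconst, sum_range_succ]
      ring
    _ = _ := by rw [sum_range_succ', walkCount, Nat.cast_one, pow_zero, div_one, add_comm 1]

/-- (Claim 2.) With `H` a connected component of `G - S` of maximum degree
at most `Δ`, completely joined to `S`, and `x` the Perron vector of `G` normalized by
`∑_{v ∈ S} x_v = ρ(G)`: if `ρ(G) > Δ` then for every vertex `u` of `H` and every `ℓ ≥ 1`,
`x_u ≤ (1 + ∑_{i=1}^ℓ w^i_H(u)/ρ^i) + (Δ/(ρ-Δ)) · w^ℓ_H(u)/ρ^ℓ`. -/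
theorem stmt_5 {V : Type*} [Fintype V] (G H : SimpleGraph V) (S T : Finset V) (Δ : ℕ)
    (x : V → ℝ)
    (hconn : G.Connected) (hS1 : 1 ≤ S.card) (hS2 : S.card < Fintype.card V)
    (hH : ∀ u v, H.Adj u v ↔ (u ∈ T ∧ v ∈ T ∧ G.Adj u v))
    (hTS : ∀ u ∈ T, u ∉ S)
    (hclosed : ∀ u ∈ T, ∀ v, G.Adj u v → v ∈ S ∨ v ∈ T)
    (hHconn : (G.induce (T : Set V)).Connected)
    (hΔ : ∀ u, H.degree u ≤ Δ)
    (hfull : ∀ u ∈ T, ∀ s ∈ S, G.Adj u s)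
    (hρΔ : spectralRad G > Δ)
    (hx : ∀ v, 0 ≤ x v) (hx0 : x ≠ 0)
    (heig : G.adjMatrix ℝ *ᵥ x = spectralRad G • x)
    (hnorm : ∑ v ∈ S, x v = spectralRad G) :
    ∀ u ∈ T, ∀ ℓ : ℕ, 1 ≤ ℓ →
      x u ≤ (1 + ∑ i ∈ Finset.range ℓ, (walkCount H (i + 1) u : ℝ) / spectralRad G ^ (i + 1))
        + ((Δ : ℝ) / (spectralRad G - Δ)) * ((walkCount H ℓ u : ℝ) / spectralRad G ^ ℓ) :=
  fun u hu ℓ _ =>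
    stmt_5_general G H S T Δ (spectralRad G) x hH hTS hclosed hΔ hfull hρΔ heig hnorm u hu ℓ
end

section
/- Let $G$ be a graph with exactly $3$ edges and no isolated vertices that is not isomorphic to the triangle $K_3$. Then $K_3$ is strictly walk-preferable to $G$; that is, there exists an integer $\ell \ge 1$ with $W^{\ell}(K_3) > W^{\ell}(G)$ and $W^{i}(K_3) = W^{i}(G)$ for all $1 \le i \le \ell - 1$. In fact one may take $\ell \le 3$. -/
open Finset Matrix SimpleGraph
open scoped Classical

/-!
A walk of length two has a middle vertex and a walk of length three a middle edge, so summing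
`deg u + deg v` over the ordered pairs of adjacent vertices `(u, v)` gives `2 W^2(G)`, and summing
`deg u * deg v` gives `W^3(G)`. Let `m` be the number of edges. Only the edge `uv` is incident to
both `u` and `v`, whence `deg u + deg v ≤ m + 1`, and `4 (deg u * deg v) ≤ (m + 1)^2` by AM-GM.
Therefore `W^2(G) ≤ m (m + 1)` and `2 W^3(G) ≤ m (m + 1)^2`, and equality in the latter forces
every non-isolated vertex to have degree `(m + 1) / 2`. For `m = 3` the bounds on `W^2` and `W^3`
are `12` and `24`, the values of `K₃`; a graph without isolated vertices attaining `W^3(G) = 24` is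
`2`-regular with three edges, so it has three vertices and is `K₃`.
-/

section Walks

variable {V : Type*} [Fintype V] (G : SimpleGraph V)

theorem sum_sum_neighborFinset_comm {M : Type*} [AddCommMonoid M] (f : V → V → M) :
    ∑ u, ∑ v ∈ G.neighborFinset u, f u v = ∑ v, ∑ u ∈ G.neighborFinset v, f u v :=
  sum_comm' fun u v => by simp only [mem_univ, mem_neighborFinset, true_and, and_true, G.adj_comm]

theorem sum_sum_neighborFinset_const (c : ℕ) :
    ∑ u, ∑ _v ∈ G.neighborFinset u, c = 2 * #G.edgeFinset * c := by
  simp only [sum_const, card_neighborFinset_eq_degree, smul_eq_mul, ← sum_mul,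
    sum_degrees_eq_twice_card_edges]

theorem walkCount_succ (ℓ : ℕ) (u : V) :
    walkCount G (ℓ + 1) u = ∑ v ∈ G.neighborFinset u, walkCount G ℓ v := by
  rw [walkCount, neighborFinset_eq_filter]

theorem walkCount_zero (v : V) : walkCount G 0 v = 1 := by
  rw [walkCount]

theorem walkCount_one (v : V) : walkCount G 1 v = G.degree v := by
  rw [walkCount_succ, ← card_neighborFinset_eq_degree, card_eq_sum_ones]
  simp only [walkCount_zero]

/-- Cut a walk of length `k + ℓ` at its `k`-th vertex and reverse the first part. -/
theorem totalWalks_add (k ℓ : ℕ) :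
    totalWalks G (k + ℓ) = ∑ u, walkCount G k u * walkCount G ℓ u := by
  induction k generalizing ℓ with
  | zero => simp only [totalWalks, walkCount_zero, zero_add, one_mul]
  | succ k ih =>
    calc totalWalks G (k + 1 + ℓ)
        = ∑ u, walkCount G k u * walkCount G (ℓ + 1) u := by rw [← ih, add_right_comm, add_assoc]
      _ = ∑ u, ∑ v ∈ G.neighborFinset u, walkCount G k u * walkCount G ℓ v := by
        simp only [walkCount_succ, mul_sum]
      _ = ∑ v, ∑ u ∈ G.neighborFinset v, walkCount G k u * walkCount G ℓ v :=
        sum_sum_neighborFinset_comm G _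
      _ = ∑ v, walkCount G (k + 1) v * walkCount G ℓ v := by
        simp only [walkCount_succ, sum_mul]

theorem totalWalks_add_add_one (k ℓ : ℕ) :
    totalWalks G (k + ℓ + 1) =
      ∑ u, ∑ v ∈ G.neighborFinset u, walkCount G k u * walkCount G ℓ v := by
  simp only [add_assoc, totalWalks_add, walkCount_succ, mul_sum]

theorem totalWalks_one : totalWalks G 1 = 2 * #G.edgeFinset := by
  simp only [totalWalks, walkCount_one, sum_degrees_eq_twice_card_edges]

theorem two_mul_totalWalks_two :
    2 * totalWalks G 2 = ∑ u, ∑ v ∈ G.neighborFinset u, (G.degree u + G.degree v) := by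
  have cut_last := totalWalks_add_add_one G 1 0
  have cut_first := totalWalks_add_add_one G 0 1
  simp only [walkCount_one, walkCount_zero, mul_one, one_mul] at cut_last cut_first
  simp only [sum_add_distrib, two_mul]
  exact congr_arg₂ (· + ·) cut_last cut_first

theorem four_mul_totalWalks_three :
    4 * totalWalks G 3 = ∑ u, ∑ v ∈ G.neighborFinset u, 4 * (G.degree u * G.degree v) := by
  simp only [totalWalks_add_add_one G 1 1, walkCount_one, mul_sum]

end Walks

section EdgeBounds

variable {V : Type*} {G : SimpleGraph V} {u v : V} [Fintype G.edgeSet]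
  [Fintype (G.neighborSet u)] [Fintype (G.neighborSet v)]

theorem degree_add_degree_le_card_edgeFinset_add_one (h : G.Adj u v) :
    G.degree u + G.degree v ≤ #G.edgeFinset + 1 := by
  have inter_eq : G.incidenceFinset u ∩ G.incidenceFinset v = {s(u, v)} := by
    rw [← coe_inj]
    simpa only [coe_inter, coe_incidenceFinset, coe_singleton]
      using G.incidenceSet_inter_incidenceSet_of_adj h
  calc G.degree u + G.degree v
      = #(G.incidenceFinset u ∪ G.incidenceFinset v) + 1 := by
        rw [← card_incidenceFinset_eq_degree, ← card_incidenceFinset_eq_degree,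
          ← card_union_add_card_inter, inter_eq, card_singleton]
    _ ≤ #G.edgeFinset + 1 := Nat.succ_le_succ <| card_le_card <|
        union_subset (G.incidenceFinset_subset u) (G.incidenceFinset_subset v)

theorem four_mul_degree_mul_degree_le (h : G.Adj u v) :
    4 * (G.degree u * G.degree v) ≤ (#G.edgeFinset + 1) ^ 2 :=
  calc 4 * (G.degree u * G.degree v) ≤ (G.degree u + G.degree v) ^ 2 := by
        rw [← mul_assoc]
        exact four_mul_le_sq_add _ _
    _ ≤ (#G.edgeFinset + 1) ^ 2 :=
        Nat.pow_le_pow_left (degree_add_degree_le_card_edgeFinset_add_one h) 2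

theorem two_mul_degree_eq_of_four_mul_degree_mul_degree_eq (h : G.Adj u v)
    (heq : 4 * (G.degree u * G.degree v) = (#G.edgeFinset + 1) ^ 2) :
    2 * G.degree u = #G.edgeFinset + 1 := by
  have sq_add_le : (G.degree u + G.degree v) ^ 2 ≤ (#G.edgeFinset + 1) ^ 2 :=
    Nat.pow_le_pow_left (degree_add_degree_le_card_edgeFinset_add_one h) 2
  have sq_sub_le : ((G.degree u : ℤ) - G.degree v) ^ 2 ≤ 0 := by
    zify at heq sq_add_le
    linarith
  have degree_eq : G.degree u = G.degree v := by
    exact_mod_cast sub_eq_zero.1 (sq_nonpos_iff _ |>.1 sq_sub_le)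
  refine Nat.pow_left_injective two_ne_zero ?_
  calc (2 * G.degree u) ^ 2 = 4 * (G.degree u * G.degree u) := by ring
    _ = (#G.edgeFinset + 1) ^ 2 := by rwa [← degree_eq] at heq

end EdgeBounds

section WalkBounds

variable {V : Type*} [Fintype V] {G : SimpleGraph V} {u v : V}

variable (G) in
theorem totalWalks_two_le : totalWalks G 2 ≤ #G.edgeFinset * (#G.edgeFinset + 1) := by
  have := calc 2 * totalWalks G 2
        = ∑ u, ∑ v ∈ G.neighborFinset u, (G.degree u + G.degree v) := two_mul_totalWalks_two G
      _ ≤ ∑ u, ∑ _v ∈ G.neighborFinset u, (#G.edgeFinset + 1) :=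
        sum_le_sum fun u _ => sum_le_sum fun v hv =>
          degree_add_degree_le_card_edgeFinset_add_one ((G.mem_neighborFinset u v).1 hv)
      _ = 2 * #G.edgeFinset * (#G.edgeFinset + 1) := sum_sum_neighborFinset_const G _
  linarith

variable (G) in
theorem two_mul_totalWalks_three_le :
    2 * totalWalks G 3 ≤ #G.edgeFinset * (#G.edgeFinset + 1) ^ 2 := by
  have := calc 4 * totalWalks G 3
        = ∑ u, ∑ v ∈ G.neighborFinset u, 4 * (G.degree u * G.degree v) :=
        four_mul_totalWalks_three G
      _ ≤ ∑ u, ∑ _v ∈ G.neighborFinset u, (#G.edgeFinset + 1) ^ 2 :=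
        sum_le_sum fun u _ => sum_le_sum fun v hv =>
          four_mul_degree_mul_degree_le ((G.mem_neighborFinset u v).1 hv)
      _ = 2 * #G.edgeFinset * (#G.edgeFinset + 1) ^ 2 := sum_sum_neighborFinset_const G _
  linarith

theorem four_mul_degree_mul_degree_eq_of_two_mul_totalWalks_three_eq
    (hW : 2 * totalWalks G 3 = #G.edgeFinset * (#G.edgeFinset + 1) ^ 2) (h : G.Adj u v) :
    4 * (G.degree u * G.degree v) = (#G.edgeFinset + 1) ^ 2 := by
  have sum_eq : ∑ u, ∑ v ∈ G.neighborFinset u, 4 * (G.degree u * G.degree v) =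
      ∑ u, ∑ _v ∈ G.neighborFinset u, (#G.edgeFinset + 1) ^ 2 := by
    rw [← four_mul_totalWalks_three, sum_sum_neighborFinset_const]
    linarith
  have term_le (u v : V) (hv : v ∈ G.neighborFinset u) :
      4 * (G.degree u * G.degree v) ≤ (#G.edgeFinset + 1) ^ 2 :=
    four_mul_degree_mul_degree_le ((G.mem_neighborFinset u v).1 hv)
  have inner_eq :=
    (sum_eq_sum_iff_of_le fun u _ => sum_le_sum (term_le u)).1 sum_eq u (mem_univ u)
  exact (sum_eq_sum_iff_of_le (term_le u)).1 inner_eq v ((G.mem_neighborFinset u v).2 h)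

theorem two_mul_degree_eq_of_two_mul_totalWalks_three_eq
    (hW : 2 * totalWalks G 3 = #G.edgeFinset * (#G.edgeFinset + 1) ^ 2) (hu : 0 < G.degree u) :
    2 * G.degree u = #G.edgeFinset + 1 := by
  obtain ⟨v, huv⟩ := (G.degree_pos_iff_exists_adj u).1 hu
  exact two_mul_degree_eq_of_four_mul_degree_mul_degree_eq huv
    (four_mul_degree_mul_degree_eq_of_two_mul_totalWalks_three_eq hW huv)

end WalkBounds

section Regular

variable {V : Type*} [Fintype V] {G : SimpleGraph V} {d : ℕ}

theorem walkCount_of_isRegularOfDegree (h : G.IsRegularOfDegree d) (ℓ : ℕ) (u : V) :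
    walkCount G ℓ u = d ^ ℓ := by
  induction ℓ generalizing u with
  | zero => rw [walkCount_zero, pow_zero]
  | succ ℓ ih =>
    simp only [walkCount_succ, ih, sum_const, card_neighborFinset_eq_degree, h.degree_eq,
      smul_eq_mul, pow_succ']

theorem totalWalks_of_isRegularOfDegree (h : G.IsRegularOfDegree d) (ℓ : ℕ) :
    totalWalks G ℓ = Fintype.card V * d ^ ℓ := by
  simp only [totalWalks, walkCount_of_isRegularOfDegree h, sum_const, card_univ, smul_eq_mul]

variable (V) in
theorem totalWalks_completeGraph (ℓ : ℕ) :
    totalWalks (completeGraph V) ℓ = Fintype.card V * (Fintype.card V - 1) ^ ℓ :=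
  totalWalks_of_isRegularOfDegree (fun v => by convert complete_graph_degree v) ℓ

theorem card_mul_eq_of_isRegularOfDegree (h : G.IsRegularOfDegree d) :
    Fintype.card V * d = 2 * #G.edgeFinset := by
  simp only [← sum_degrees_eq_twice_card_edges, h.degree_eq, sum_const, card_univ, smul_eq_mul]

theorem eq_top_of_isRegularOfDegree_card_sub_one
    (h : G.IsRegularOfDegree (Fintype.card V - 1)) : G = ⊤ :=
  eq_top_iff_forall_isUniversal.2 fun v => (G.degree_eq_card_sub_one v).1 (h.degree_eq v)

theorem nonempty_iso_completeGraph_of_isRegularOfDegree (h : G.IsRegularOfDegree d) (hd : 0 < d)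
    (hE : 2 * #G.edgeFinset = (d + 1) * d) : Nonempty (G ≃g completeGraph (Fin (d + 1))) := by
  have card_eq : Fintype.card V = d + 1 :=
    Nat.eq_of_mul_eq_mul_right hd ((card_mul_eq_of_isRegularOfDegree h).trans hE)
  obtain rfl : G = ⊤ := eq_top_of_isRegularOfDegree_card_sub_one (by rwa [card_eq])
  exact ⟨Iso.completeGraph (Fintype.equivFinOfCardEq card_eq)⟩

end Regular

/-- If `G` has exactly `3` edges, no isolated vertices, and is not
isomorphic to `K₃`, then `K₃` is strictly walk-preferable to `G`, witnessed by some
`ℓ ≤ 3`. -/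
theorem stmt_10 {V : Type*} [Fintype V] (G : SimpleGraph V)
    (hE : G.edgeFinset.card = 3) (hiso : ∀ v, 0 < G.degree v)
    (hnot : ¬ Nonempty (G ≃g completeGraph (Fin 3))) :
    ∃ ℓ : ℕ, 1 ≤ ℓ ∧ ℓ ≤ 3 ∧
      totalWalks G ℓ < totalWalks (completeGraph (Fin 3)) ℓ ∧
      ∀ i : ℕ, 1 ≤ i → i ≤ ℓ - 1 →
        totalWalks (completeGraph (Fin 3)) i = totalWalks G i := by
  have K₃_walks (ℓ : ℕ) : totalWalks (completeGraph (Fin 3)) ℓ = 3 * 2 ^ ℓ :=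
    totalWalks_completeGraph (Fin 3) ℓ
  have W_one : totalWalks G 1 = 6 := by rw [totalWalks_one, hE]
  have W_two_le : totalWalks G 2 ≤ 12 := by simpa only [hE] using totalWalks_two_le G
  have W_three_le : 2 * totalWalks G 3 ≤ 48 := by
    simpa only [hE, Nat.reduceAdd, Nat.reducePow, Nat.reduceMul]
      using two_mul_totalWalks_three_le G
  have W_three_ne : 2 * totalWalks G 3 ≠ 48 := fun W_three => by
    have regular : G.IsRegularOfDegree 2 := fun v => by
      have := two_mul_degree_eq_of_two_mul_totalWalks_three_eq (by rwa [hE]) (hiso v)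
      omega
    exact hnot (nonempty_iso_completeGraph_of_isRegularOfDegree regular two_pos (by rw [hE]))
  obtain W_two_lt | W_two := W_two_le.lt_or_eq
  · refine ⟨2, by omega, by omega, by rwa [K₃_walks], fun i _ _ => ?_⟩
    obtain rfl : i = 1 := by omega
    exact (K₃_walks 1).trans W_one.symm
  · refine ⟨3, by omega, by omega, by rw [K₃_walks]; omega, fun i _ _ => ?_⟩
    obtain rfl | rfl : i = 1 ∨ i = 2 := by omega
    · exact (K₃_walks 1).trans W_one.symm
    · exact (K₃_walks 2).trans W_two.symm
end
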